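/- arXiv:1609.03043 — 3 statements merged into one kernel-verified Lean document; each statement's English description precedes it below -/
import Mathlib

section
/- Let D ⊂ ℝ³ be a bounded convex measurable set. Then ∫_{θ∈[0,2π)} ∫_{p∈ℝ} ∫_{t∈ℝ} σ(p,θ,t) dt dp dθ = 2π · vol(D), where σ(p,θ,t) is the chord length of the oriented horizontal line γ_{p,θ,t} in D and vol(D) is the three-dimensional Lebesgue measure of D. -/
open MeasureTheory Real Set

noncomputable section

/-- The oriented horizontal line `γ_{p,θ,t}` in the Heisenberg group `H₁ = ℝ³`,
parametrized by horizontal arclength `s`: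
`γ_{p,θ,t}(s) = (p cosθ + s sinθ, p sinθ − s cosθ, t + s p)`. -/
def hLine (p θ t s : ℝ) : ℝ × ℝ × ℝ :=
  (p * Real.cos θ + s * Real.sin θ, p * Real.sin θ - s * Real.cos θ, t + s * p)

/-!
For a fixed direction `θ`, the map `(p, t, s) ↦ γ_{p,θ,t}(s)` is the vertical shear `t ↦ t + s p`
followed by a reflection of the `(p, s)`-plane, so it preserves Lebesgue measure. Slicing the
preimage of `D` under this map into chords, the chord integral over all lines of direction `θ` is
already the volume of `D`; integrating over `θ` contributes the factor `2π`.
-/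

section Slices

variable {α β γ : Type*} [MeasurableSpace α] [MeasurableSpace β] [MeasurableSpace γ]
  {μ : Measure α} {ν : Measure β} {τ : Measure γ} [SFinite ν]

lemma exists_measurableSet_ae_slice_ae_eq {S : Set (α × β)} (hS : NullMeasurableSet S (μ.prod ν)) :
    ∃ T, MeasurableSet T ∧ S =ᵐ[μ.prod ν] T ∧
      ∀ᵐ a ∂μ, (Prod.mk a ⁻¹' S : Set β) =ᵐ[ν] Prod.mk a ⁻¹' T := by
  obtain ⟨T, hT, hST⟩ := hS
  exact ⟨T, hT, hST, Measure.ae_ae_of_ae_prod hST⟩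

lemma ae_nullMeasurableSet_slice {S : Set (α × β)} (hS : NullMeasurableSet S (μ.prod ν)) :
    ∀ᵐ a ∂μ, NullMeasurableSet (Prod.mk a ⁻¹' S) ν := by
  obtain ⟨T, hT, -, hslice⟩ := exists_measurableSet_ae_slice_ae_eq hS
  filter_upwards [hslice] with a ha
  exact (hT.preimage measurable_prodMk_left).nullMeasurableSet.congr ha.symm

lemma measure_prod_eq_lintegral_slice {S : Set (α × β)} (hS : NullMeasurableSet S (μ.prod ν)) :
    μ.prod ν S = ∫⁻ a, ν (Prod.mk a ⁻¹' S) ∂μ := by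
  obtain ⟨T, hT, hST, hslice⟩ := exists_measurableSet_ae_slice_ae_eq hS
  calc
    μ.prod ν S = μ.prod ν T := measure_congr hST
    _ = ∫⁻ a, ν (Prod.mk a ⁻¹' T) ∂μ := Measure.prod_apply hT
    _ = ∫⁻ a, ν (Prod.mk a ⁻¹' S) ∂μ :=
      lintegral_congr_ae (hslice.mono fun _ ha => (measure_congr ha).symm)

lemma measure_prod_prod_eq_lintegral_lintegral_slice [SFinite τ] {S : Set (α × β × γ)}
    (hS : NullMeasurableSet S (μ.prod (ν.prod τ))) :
    μ.prod (ν.prod τ) S = ∫⁻ a, ∫⁻ b, τ {c | (a, b, c) ∈ S} ∂ν ∂μ := by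
  rw [measure_prod_eq_lintegral_slice hS]
  refine lintegral_congr_ae ?_
  filter_upwards [ae_nullMeasurableSet_slice hS] with a ha
  exact measure_prod_eq_lintegral_slice ha

end Slices

lemma measurePreserving_of_abs_det_eq_one {E : Type*} [NormedAddCommGroup E] [NormedSpace ℝ E]
    [MeasurableSpace E] [BorelSpace E] [FiniteDimensional ℝ E] (μ : Measure E) [μ.IsAddHaarMeasure]
    {f : E →ₗ[ℝ] E} (hf : |LinearMap.det f| = 1) : MeasurePreserving f μ μ where
  measurable := f.continuous_of_finiteDimensional.measurable
  map_eq := by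
    have hdet : LinearMap.det f ≠ 0 := abs_ne_zero.mp (hf.trans_ne one_ne_zero)
    rw [Measure.map_linearMap_addHaar_eq_smul_addHaar μ hdet, abs_inv, hf, inv_one,
      ENNReal.ofReal_one, one_smul]

lemma volume_preserving_finTwoProd {a b c d : ℝ} (h : |a * d - b * c| = 1) :
    MeasurePreserving fun x : ℝ × ℝ => (a * x.1 + b * x.2, c * x.1 + d * x.2) := by
  let f := Matrix.toLin (Module.Basis.finTwoProd ℝ) (Module.Basis.finTwoProd ℝ) !![a, b; c, d]
  have hdet : |LinearMap.det f| = 1 := by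
    rwa [LinearMap.det_toLin, Matrix.det_fin_two_of]
  have hf : (fun x : ℝ × ℝ => (a * x.1 + b * x.2, c * x.1 + d * x.2)) = f :=
    funext fun x => (Matrix.toLin_finTwoProd_apply a b c d x).symm
  exact hf ▸ measurePreserving_of_abs_det_eq_one volume hdet

lemma volume_preserving_cos_sin_reflection (θ : ℝ) :
    MeasurePreserving fun x : ℝ × ℝ => (x.1 * cos θ + x.2 * sin θ, x.1 * sin θ - x.2 * cos θ) := by
  have hdet : |cos θ * -cos θ - sin θ * sin θ| = 1 := by
    have hneg : cos θ * -cos θ - sin θ * sin θ = -1 := by linarith [sin_sq_add_cos_sq θ]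
    rw [hneg, abs_neg, abs_one]
  convert volume_preserving_finTwoProd hdet using 3 <;> ring

lemma measurePreserving_prod_add_right {α G : Type*} [MeasurableSpace α] [MeasurableSpace G]
    [AddGroup G] [MeasurableAdd₂ G] (μ : Measure α) [SFinite μ] (ν : Measure G) [SFinite ν]
    [ν.IsAddRightInvariant] {g : α → G} (hg : Measurable g) :
    MeasurePreserving (fun x : α × G => (x.1, x.2 + g x.1)) (μ.prod ν) (μ.prod ν) :=
  (MeasurePreserving.id μ).skew_product (g := fun a y => y + g a) (by fun_prop)
    (ae_of_all _ fun a => map_add_right_eq_self ν (g a))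

lemma volume_preserving_hLine (θ : ℝ) :
    MeasurePreserving fun x : ℝ × ℝ × ℝ => hLine x.1 θ x.2.1 x.2.2 := by
  have reorder : MeasurePreserving fun x : ℝ × ℝ × ℝ => ((x.1, x.2.2), x.2.1) :=
    (volume_preserving_prodAssoc.symm).comp
      ((MeasurePreserving.id volume).prod Measure.measurePreserving_swap)
  have shear : MeasurePreserving fun y : (ℝ × ℝ) × ℝ => (y.1, y.2 + y.1.2 * y.1.1) :=
    measurePreserving_prod_add_right volume volume (g := fun x : ℝ × ℝ => x.2 * x.1) (by fun_prop)
  have reflect : MeasurePreserving fun y : (ℝ × ℝ) × ℝ =>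
      ((y.1.1 * cos θ + y.1.2 * sin θ, y.1.1 * sin θ - y.1.2 * cos θ), y.2) :=
    (volume_preserving_cos_sin_reflection θ).prod (MeasurePreserving.id volume)
  exact volume_preserving_prodAssoc.comp (reflect.comp (shear.comp reorder))

lemma lintegral_lintegral_volume_chord_eq_volume {D : Set (ℝ × ℝ × ℝ)} (hD : NullMeasurableSet D)
    (θ : ℝ) : ∫⁻ p : ℝ, ∫⁻ t : ℝ, volume {s : ℝ | hLine p θ t s ∈ D} = volume D := by
  have hline := volume_preserving_hLine θ
  rw [← hline.measure_preimage hD]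
  exact (measure_prod_prod_eq_lintegral_lintegral_slice
    (hD.preimage hline.quasiMeasurePreserving)).symm

theorem chord_integral_eq_two_pi_mul_volume_general
    {D : Set (ℝ × ℝ × ℝ)} (hD : NullMeasurableSet D) :
    (∫⁻ θ in Set.Ico (0 : ℝ) (2 * π), ∫⁻ p : ℝ, ∫⁻ t : ℝ,
        volume {s : ℝ | hLine p θ t s ∈ D}) =
      ENNReal.ofReal (2 * π) * volume D := by
  simp_rw [lintegral_lintegral_volume_chord_eq_volume hD]
  rw [setLIntegral_const, Real.volume_Ico, sub_zero, mul_comm]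

/-- For a bounded convex measurable set `D ⊂ ℝ³`, the integral of the chord length
`σ(p,θ,t) = Leb¹{s : γ_{p,θ,t}(s) ∈ D}` over all horizontal lines (with density
`dp dθ dt`, `θ ∈ [0,2π)`) equals `2π · vol(D)`. -/
theorem chord_integral_eq_two_pi_mul_volume
    (D : Set (ℝ × ℝ × ℝ)) (hconv : Convex ℝ D)
    (hbdd : Bornology.IsBounded D) (hmeas : MeasurableSet D) :
    (∫⁻ θ in Set.Ico (0 : ℝ) (2 * π), ∫⁻ p : ℝ, ∫⁻ t : ℝ,
        volume {s : ℝ | hLine p θ t s ∈ D}) =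
      ENNReal.ofReal (2 * π) * volume D :=
  chord_integral_eq_two_pi_mul_volume_general hmeas.nullMeasurableSet
end
end

section
/- Let D ⊂ ℝ³ be a nonempty bounded open convex set and ℓ > 0. Then the four-dimensional Lebesgue measure of the set of positioned segments meeting D, namely of {(p,θ,t,h) ∈ ℝ × [0,2π) × ℝ × ℝ : ∃ s ∈ [h, h+ℓ], γ_{p,θ,t}(s) ∈ D}, equals 2π · vol(D) + ℓ · m(D), where vol(D) is the Lebesgue volume of D and m(D) is the three-dimensional Lebesgue measure of {(p,θ,t) ∈ ℝ × [0,2π) × ℝ : ∃ s ∈ ℝ, γ_{p,θ,t}(s) ∈ D} (the measure of the set of oriented horizontal lines meeting D). -/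
/-!
On a single line, the positions `h` at which `[h, h + ℓ]` meets a nonempty interval `S` form an
interval of length `|S| + ℓ`. Integrating over the lines with direction in `Θ`, the term `ℓ`
contributes `ℓ` times the measure of the lines meeting `D`. The term `|S|` contributes the measure
of the `(p, θ, t, s)` with `γ_{p,θ,t}(s) ∈ D`; for each fixed `θ` the map
`(p, t, s) ↦ γ_{p,θ,t}(s)` preserves volume, being a plane reflection in `(p, s)` followed by a
translation in `t` depending on `(p, s)`, so this is `|Θ| · vol(D)`.
-/

open MeasureTheory Real Set

noncomputable section

-- A segment left of `c` can meet `S` only by having its right endpoint in `S`, a segment right of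
-- `c` only by having its left endpoint in `S`, and a segment containing `c` always meets `S`.
lemma setOf_Icc_meets_eq_union {G : Type*} [AddCommGroup G] [LinearOrder G] [IsOrderedAddMonoid G]
    {S : Set G} {c ℓ : G} (hS : S.OrdConnected) (hc : c ∈ S) (hℓ : 0 ≤ ℓ) :
    {h : G | ∃ s ∈ Icc h (h + ℓ), s ∈ S} =
      (· + ℓ) ⁻¹' (S ∩ Iio c) ∪ (Ico (c - ℓ) c ∪ S ∩ Ici c) := by
  ext h
  simp only [mem_ofPred_eq, mem_union, mem_preimage, mem_inter_iff, mem_Icc, mem_Iio, mem_Ico,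
    mem_Ici, sub_le_iff_le_add]
  have hle : h ≤ h + ℓ := le_add_of_nonneg_right hℓ
  constructor
  · rintro ⟨s, ⟨hhs, hsh⟩, hs⟩
    rcases le_or_gt c h with hch | hhc
    · exact .inr (.inr ⟨hS.out hc hs ⟨hch, hhs⟩, hch⟩)
    rcases lt_or_ge (h + ℓ) c with hlc | hcl
    · exact .inl ⟨hS.out hs hc ⟨hsh, hlc.le⟩, hlc⟩
    · exact .inr (.inl ⟨hcl, hhc⟩)
  · rintro (⟨hs, -⟩ | ⟨hcl, hhc⟩ | ⟨hs, -⟩)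
    · exact ⟨h + ℓ, ⟨hle, le_rfl⟩, hs⟩
    · exact ⟨c, ⟨hhc.le, hcl⟩, hc⟩
    · exact ⟨h, ⟨le_rfl, hle⟩, hs⟩

lemma volume_setOf_Icc_meets {S : Set ℝ} {ℓ : ℝ} (hS : S.OrdConnected) (hne : S.Nonempty)
    (hℓ : 0 ≤ ℓ) :
    volume {h : ℝ | ∃ s ∈ Icc h (h + ℓ), s ∈ S} = volume S + ENNReal.ofReal ℓ := by
  obtain ⟨c, hc⟩ := hne
  have hmeas : MeasurableSet (S ∩ Ici c) := hS.measurableSet.inter measurableSet_Ici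
  have hdisj_right : Disjoint (Ico (c - ℓ) c) (S ∩ Ici c) :=
    disjoint_left.2 fun _ hx hx' => hx.2.not_ge hx'.2
  have hdisj_left : Disjoint ((· + ℓ) ⁻¹' (S ∩ Iio c)) (Ico (c - ℓ) c ∪ S ∩ Ici c) := by
    refine disjoint_left.2 fun x ⟨_, hx⟩ hx' => ?_
    rcases hx' with ⟨hx', -⟩ | ⟨-, hx'⟩ <;> simp only [mem_Iio, mem_Ici] at hx hx' <;> linarith
  calc volume {h : ℝ | ∃ s ∈ Icc h (h + ℓ), s ∈ S}
      = volume (S ∩ Iio c) + (ENNReal.ofReal ℓ + volume (S ∩ Ici c)) := by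
        rw [setOf_Icc_meets_eq_union hS hc hℓ,
          measure_union hdisj_left (measurableSet_Ico.union hmeas),
          measure_union hdisj_right hmeas, measure_preimage_add_right, Real.volume_Ico,
          sub_sub_cancel]
    _ = volume S + ENNReal.ofReal ℓ := by
        rw [← measure_inter_add_sdiff S measurableSet_Iio, sdiff_eq, compl_Iio]
        ring

section Fibers

variable {X : Type*} [TopologicalSpace X] {B : Set (X × ℝ)} {ℓ : ℝ}

lemma isOpen_setOf_Icc_meets_fiber (hB : IsOpen B) :
    IsOpen {w : X × ℝ | ∃ s ∈ Icc w.2 (w.2 + ℓ), (w.1, s) ∈ B} := by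
  have heq : {w : X × ℝ | ∃ s ∈ Icc w.2 (w.2 + ℓ), (w.1, s) ∈ B} =
      ⋃ u ∈ Icc 0 ℓ, (fun w : X × ℝ => (w.1, w.2 + u)) ⁻¹' B := by
    ext ⟨x, h⟩
    simp only [mem_ofPred_eq, mem_iUnion, mem_preimage, exists_prop]
    constructor
    · rintro ⟨s, ⟨hhs, hsh⟩, hs⟩
      exact ⟨s - h, ⟨by linarith, by linarith⟩, by rwa [add_sub_cancel]⟩
    · rintro ⟨u, ⟨hu0, huℓ⟩, hu⟩
      exact ⟨h + u, ⟨by linarith, by linarith⟩, hu⟩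
  rw [heq]
  exact isOpen_biUnion fun u _ => hB.preimage (by fun_prop)

lemma measure_setOf_Icc_meets_fiber [MeasurableSpace X] [OpensMeasurableSpace X]
    (μ : Measure X) (hB : IsOpen B) (hfib : ∀ x, (Prod.mk x ⁻¹' B).OrdConnected) (hℓ : 0 ≤ ℓ) :
    μ.prod volume {w : X × ℝ | ∃ s ∈ Icc w.2 (w.2 + ℓ), (w.1, s) ∈ B} =
      μ.prod volume B + ENNReal.ofReal ℓ * μ (Prod.fst '' B) := by
  have hshadow : MeasurableSet (Prod.fst '' B) := (isOpenMap_fst B hB).measurableSet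
  rw [Measure.prod_apply (isOpen_setOf_Icc_meets_fiber hB).measurableSet,
    Measure.prod_apply hB.measurableSet, ← lintegral_indicator_const hshadow,
    ← lintegral_add_left (measurable_measure_prodMk_left hB.measurableSet)]
  refine lintegral_congr fun x => ?_
  rcases (Prod.mk x ⁻¹' B).eq_empty_or_nonempty with hempty | hne
  · have hmiss : ∀ s, (x, s) ∉ B := fun s => Set.eq_empty_iff_forall_notMem.1 hempty s
    have hx : x ∉ Prod.fst '' B := by rintro ⟨⟨_, s⟩, hs, rfl⟩; exact hmiss s hs
    simp [hmiss, hempty, hx]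
  · have hx : x ∈ Prod.fst '' B := let ⟨s, hs⟩ := hne; ⟨(x, s), hs, rfl⟩
    rw [indicator_of_mem hx]
    exact volume_setOf_Icc_meets (hfib x) hne hℓ

end Fibers

section Rearrangement

variable {α β γ δ : Type*} [MeasurableSpace α] [MeasurableSpace β] [MeasurableSpace γ]
  [MeasurableSpace δ] (μ : Measure α) (ν : Measure β) (τ : Measure γ) (σ : Measure δ)
  [SFinite μ] [SFinite ν] [SFinite τ] [SFinite σ]

lemma measurePreserving_prodLeftComm :
    MeasurePreserving (fun w : α × β × γ => (w.2.1, w.1, w.2.2))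
      (μ.prod (ν.prod τ)) (ν.prod (μ.prod τ)) :=
  ((measurePreserving_prodAssoc ν μ τ).comp
    (Measure.measurePreserving_swap.prod (.id τ))).comp (measurePreserving_prodAssoc μ ν τ).symm

lemma measurePreserving_prodAssoc₄ :
    MeasurePreserving (fun w : (α × β × γ) × δ => (w.1.1, w.1.2.1, w.1.2.2, w.2))
      ((μ.prod (ν.prod τ)).prod σ) (μ.prod (ν.prod (τ.prod σ))) :=
  ((MeasurePreserving.id μ).prod (measurePreserving_prodAssoc ν τ σ)).comp
    (measurePreserving_prodAssoc μ (ν.prod τ) σ)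

end Rearrangement

lemma measurePreserving_reflection (θ : ℝ) :
    MeasurePreserving fun z : ℝ × ℝ =>
      (z.1 * cos θ + z.2 * sin θ, z.1 * sin θ - z.2 * cos θ) := by
  let L : ℝ × ℝ →ₗ[ℝ] ℝ × ℝ := Matrix.toLin (.finTwoProd ℝ) (.finTwoProd ℝ)
    !![cos θ, sin θ; sin θ, -cos θ]
  have hdet : LinearMap.det L = -1 := by
    rw [LinearMap.det_toLin, Matrix.det_fin_two_of]
    linear_combination -sin_sq_add_cos_sq θ
  have hL : (fun z : ℝ × ℝ => (z.1 * cos θ + z.2 * sin θ, z.1 * sin θ - z.2 * cos θ)) = L := by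
    ext z <;> simp only [L, Matrix.toLin_finTwoProd_apply] <;> ring
  refine ⟨by fun_prop, ?_⟩
  rw [hL, Measure.map_linearMap_addHaar_eq_smul_addHaar volume (by rw [hdet]; norm_num), hdet]
  simp

lemma continuous_hLine :
    Continuous fun w : (ℝ × ℝ × ℝ) × ℝ => hLine w.1.1 w.1.2.1 w.1.2.2 w.2 := by
  unfold hLine
  fun_prop

lemma hLine_eq_lineMap (p θ t : ℝ) :
    hLine p θ t = AffineMap.lineMap (hLine p θ t 0) (hLine p θ t 1) := by
  ext s <;> simp [hLine, AffineMap.lineMap_apply] <;> ring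

lemma measurePreserving_hLine (θ : ℝ) :
    MeasurePreserving fun w : ℝ × ℝ × ℝ => hLine w.1 θ w.2.1 w.2.2 := by
  have hshear : MeasurePreserving fun w : (ℝ × ℝ) × ℝ =>
      ((w.1.1 * cos θ + w.1.2 * sin θ, w.1.1 * sin θ - w.1.2 * cos θ), w.2 + w.1.2 * w.1.1) :=
    (measurePreserving_reflection θ).skew_product (g := fun z t => t + z.2 * z.1) (by fun_prop)
      (.of_forall fun z => (measurePreserving_add_right volume (z.2 * z.1)).map_eq)
  have hreorder : MeasurePreserving fun w : ℝ × ℝ × ℝ => ((w.1, w.2.2), w.2.1) :=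
    volume_preserving_prodAssoc.symm.comp
      ((MeasurePreserving.id volume).prod Measure.measurePreserving_swap)
  exact volume_preserving_prodAssoc.comp (hshear.comp hreorder)

lemma measurePreserving_direction_hLine :
    MeasurePreserving fun q : ℝ × ℝ × ℝ × ℝ => (q.2.1, hLine q.1 q.2.1 q.2.2.1 q.2.2.2) := by
  have hfiber : MeasurePreserving fun w : ℝ × ℝ × ℝ × ℝ =>
      (w.1, hLine w.2.1 w.1 w.2.2.1 w.2.2.2) :=
    (MeasurePreserving.id volume).skew_product
      (g := fun (θ : ℝ) (w : ℝ × ℝ × ℝ) => hLine w.1 θ w.2.1 w.2.2)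
      (by unfold hLine; fun_prop) (.of_forall fun θ => (measurePreserving_hLine θ).map_eq)
  exact hfiber.comp (measurePreserving_prodLeftComm volume volume volume)

section Directions

variable {D : Set (ℝ × ℝ × ℝ)} {Θ : Set ℝ}

lemma volume_setOf_hLine_mem (hD : MeasurableSet D) (hΘ : MeasurableSet Θ) :
    volume {q : ℝ × ℝ × ℝ × ℝ | q.2.1 ∈ Θ ∧ hLine q.1 q.2.1 q.2.2.1 q.2.2.2 ∈ D} =
      volume Θ * volume D := by
  rw [← Measure.prod_prod]
  exact measurePreserving_direction_hLine.measure_preimage (hΘ.prod hD).nullMeasurableSet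

lemma restrict_direction_prod_apply (hΘ : MeasurableSet Θ) {T : Set ((ℝ × ℝ × ℝ) × ℝ)}
    (hT : MeasurableSet T) :
    ((volume : Measure (ℝ × ℝ × ℝ)).restrict {q | q.2.1 ∈ Θ}).prod volume T =
      volume {q : ℝ × ℝ × ℝ × ℝ | q.2.1 ∈ Θ ∧ ((q.1, q.2.1, q.2.2.1), q.2.2.2) ∈ T} := by
  have hmeas : MeasurableSet
      {q : ℝ × ℝ × ℝ × ℝ | q.2.1 ∈ Θ ∧ ((q.1, q.2.1, q.2.2.1), q.2.2.2) ∈ T} :=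
    (hΘ.preimage (by fun_prop)).inter (hT.preimage (by fun_prop))
  rw [← Measure.restrict_univ (μ := (volume : Measure ℝ)), Measure.prod_restrict,
    Measure.restrict_apply hT]
  refine .trans ?_ <| (measurePreserving_prodAssoc₄ volume volume volume volume).measure_preimage
    hmeas.nullMeasurableSet
  congr 1
  ext w
  simp [and_comm]

/-- `D` is horizontally convex if every horizontal line meets it in an interval, possibly empty
or unbounded. This is the notion of convexity adapted to the Heisenberg group; the interval is
recorded in the arclength parameter of the line. -/
def HorizontallyConvex (D : Set (ℝ × ℝ × ℝ)) : Prop :=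
  ∀ p θ t : ℝ, (hLine p θ t ⁻¹' D).OrdConnected

lemma horizontallyConvex_of_convex (hD : Convex ℝ D) : HorizontallyConvex D := by
  intro p θ t
  rw [hLine_eq_lineMap]
  exact (hD.affine_preimage _).ordConnected

theorem measure_segments_meeting_convex_general (hconv : HorizontallyConvex D) (hopen : IsOpen D)
    (hΘ : MeasurableSet Θ) {ℓ : ℝ} (hℓ : 0 ≤ ℓ) :
    volume {q : ℝ × ℝ × ℝ × ℝ | q.2.1 ∈ Θ ∧
        ∃ s ∈ Icc q.2.2.2 (q.2.2.2 + ℓ), hLine q.1 q.2.1 q.2.2.1 s ∈ D} =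
      volume Θ * volume D +
        ENNReal.ofReal ℓ *
          volume {q : ℝ × ℝ × ℝ | q.2.1 ∈ Θ ∧ ∃ s : ℝ, hLine q.1 q.2.1 q.2.2 s ∈ D} := by
  set μ := (volume : Measure (ℝ × ℝ × ℝ)).restrict {q | q.2.1 ∈ Θ}
  set B : Set ((ℝ × ℝ × ℝ) × ℝ) := {w | hLine w.1.1 w.1.2.1 w.1.2.2 w.2 ∈ D}
  have hB : IsOpen B := hopen.preimage continuous_hLine
  have hlines : μ (Prod.fst '' B) =
      volume {q : ℝ × ℝ × ℝ | q.2.1 ∈ Θ ∧ ∃ s : ℝ, hLine q.1 q.2.1 q.2.2 s ∈ D} := by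
    rw [Measure.restrict_apply (isOpenMap_fst B hB).measurableSet]
    congr 1
    ext q
    simp [B, and_comm]
  rw [← volume_setOf_hLine_mem hopen.measurableSet hΘ, ← hlines]
  have hfibers := measure_setOf_Icc_meets_fiber μ hB (fun q => hconv q.1 q.2.1 q.2.2) hℓ
  rwa [restrict_direction_prod_apply hΘ (isOpen_setOf_Icc_meets_fiber hB).measurableSet,
    restrict_direction_prod_apply hΘ hB.measurableSet] at hfibers

end Directions

/-- Kinematic measure of positioned segments of length `ℓ` meeting a nonempty bounded
open convex set `D ⊂ ℝ³`: the 4-dimensional Lebesgue measure (density `dp dθ dt dh`,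
`θ ∈ [0,2π)`) of `{(p,θ,t,h) : ∃ s ∈ [h,h+ℓ], γ_{p,θ,t}(s) ∈ D}` equals
`2π · vol(D) + ℓ · m(D)`, where `m(D)` is the measure of the set of oriented
horizontal lines meeting `D`. -/
theorem measure_segments_meeting_convex
    (D : Set (ℝ × ℝ × ℝ)) (hne : D.Nonempty) (hconv : Convex ℝ D)
    (hbdd : Bornology.IsBounded D) (hopen : IsOpen D)
    (ℓ : ℝ) (hℓ : 0 < ℓ) :
    volume {q : ℝ × ℝ × ℝ × ℝ | q.2.1 ∈ Set.Ico (0 : ℝ) (2 * π) ∧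
        ∃ s ∈ Set.Icc q.2.2.2 (q.2.2.2 + ℓ), hLine q.1 q.2.1 q.2.2.1 s ∈ D} =
      ENNReal.ofReal (2 * π) * volume D +
        ENNReal.ofReal ℓ *
          volume {q : ℝ × ℝ × ℝ | q.2.1 ∈ Set.Ico (0 : ℝ) (2 * π) ∧
            ∃ s : ℝ, hLine q.1 q.2.1 q.2.2 s ∈ D} := by
  simpa using measure_segments_meeting_convex_general (horizontallyConvex_of_convex hconv) hopen
    (measurableSet_Ico (a := 0) (b := 2 * π)) hℓ.le
end
end

section
/- Let Φ = Φ_{(a,b,c),α} be a pseudohermitian transformation of H₁. Then the image under Φ of the oriented horizontal line γ_{p,θ,t} is again the image of an oriented horizontal line: there exists t' ∈ ℝ such that Φ(γ_{p,θ,t}(ℝ)) = γ_{p',θ',t'}(ℝ), where θ' ≡ θ + α (mod 2π) and p' = p + a cosθ' + b sinθ'. -/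
open Real Set

noncomputable section

/-- Rotation `R_α` by angle `α` about the `t`-axis. -/
def rot (α : ℝ) (q : ℝ × ℝ × ℝ) : ℝ × ℝ × ℝ :=
  (q.1 * Real.cos α - q.2.1 * Real.sin α, q.1 * Real.sin α + q.2.1 * Real.cos α, q.2.2)

/-- Heisenberg left translation `L_{(a,b,c)}(x,y,t) = (a+x, b+y, c+t+bx−ay)`. -/
def heisL (Q q : ℝ × ℝ × ℝ) : ℝ × ℝ × ℝ :=
  (Q.1 + q.1, Q.2.1 + q.2.1, Q.2.2 + q.2.2 + Q.2.1 * q.1 - Q.1 * q.2.1)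

/-- Pseudohermitian transformation `Φ_{Q,α} = L_Q ∘ R_α`. -/
def psh (Q : ℝ × ℝ × ℝ) (α : ℝ) (q : ℝ × ℝ × ℝ) : ℝ × ℝ × ℝ :=
  heisL Q (rot α q)

/-! The rotation `R_α` carries `γ_{p,θ,t}` to `γ_{p,θ+α,t}` parameter by parameter. For the left
translation, decompose `(a, b)` in the orthonormal frame `(cos θ, sin θ)`, `(sin θ, -cos θ)`
attached to the line: the first component is added to `p`, the second, `d`, shifts the arclength
parameter. The third coordinate is again affine in `s + d` with slope the new `p`, which determines
`t'`. -/

theorem hLine_periodic (p t : ℝ) : Function.Periodic (fun θ ↦ hLine p θ t) (2 * π) := by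
  intro θ
  funext s
  simp only [hLine, Real.cos_add_two_pi, Real.sin_add_two_pi]

theorem rot_hLine (α p θ t s : ℝ) : rot α (hLine p θ t s) = hLine p (θ + α) t s := by
  simp only [rot, hLine, Real.cos_add, Real.sin_add, Prod.mk.injEq, and_true]
  constructor <;> ring

theorem image_rot_range_hLine (α p θ t : ℝ) :
    rot α '' range (hLine p θ t) = range (hLine p (θ + α) t) := by
  rw [← range_comp]
  exact congrArg range (funext (rot_hLine α p θ t))

/-- The component of `(a, b)` along the direction `(sin θ, -cos θ)` of the plane projection of
`γ_{p,θ,t}`: the amount by which translation by `(a, b, c)` shifts the arclength parameter. -/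
def arclengthShift (a b θ : ℝ) : ℝ :=
  a * Real.sin θ - b * Real.cos θ

theorem heisL_hLine (a b c p θ t s : ℝ) :
    heisL (a, b, c) (hLine p θ t s) =
      hLine (p + a * Real.cos θ + b * Real.sin θ) θ
        (c + t - arclengthShift a b θ * (2 * p + a * Real.cos θ + b * Real.sin θ))
        (s + arclengthShift a b θ) := by
  have sin_sq_add_cos_sq := Real.sin_sq_add_cos_sq θ
  simp only [heisL, hLine, arclengthShift, Prod.mk.injEq]
  refine ⟨?_, ?_, by ring⟩
  · linear_combination -a * sin_sq_add_cos_sq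
  · linear_combination -b * sin_sq_add_cos_sq

theorem image_heisL_range_hLine (a b c p θ t : ℝ) :
    heisL (a, b, c) '' range (hLine p θ t) =
      range (hLine (p + a * Real.cos θ + b * Real.sin θ) θ
        (c + t - arclengthShift a b θ * (2 * p + a * Real.cos θ + b * Real.sin θ))) := by
  rw [← range_comp, ← (add_right_surjective (arclengthShift a b θ)).range_comp (hLine _ θ _)]
  exact congrArg range (funext (heisL_hLine a b c p θ t))

theorem image_psh_range_hLine (a b c α p θ t : ℝ) :
    psh (a, b, c) α '' range (hLine p θ t) =
      range (hLine (p + a * Real.cos (θ + α) + b * Real.sin (θ + α)) (θ + α)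
        (c + t - arclengthShift a b (θ + α) *
          (2 * p + a * Real.cos (θ + α) + b * Real.sin (θ + α)))) :=
  calc
    psh (a, b, c) α '' range (hLine p θ t)
      = heisL (a, b, c) '' (rot α '' range (hLine p θ t)) := image_comp _ _ _
    _ = heisL (a, b, c) '' range (hLine p (θ + α) t) := by rw [image_rot_range_hLine]
    _ = _ := image_heisL_range_hLine a b c p (θ + α) t

/-- A pseudohermitian transformation `Φ_{(a,b,c),α}` maps the image of the oriented
horizontal line `γ_{p,θ,t}` onto the image of an oriented horizontal line
`γ_{p',θ',t'}`, where `θ' ≡ θ + α (mod 2π)` and `p' = p + a cosθ' + b sinθ'`. -/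
theorem psh_image_hLine
    (a b c α p θ t : ℝ) (hθ : θ ∈ Set.Ico (0 : ℝ) (2 * π)) :
    ∃ t' θ' : ℝ, θ' ∈ Set.Ico (0 : ℝ) (2 * π) ∧
      (∃ k : ℤ, θ' = θ + α + 2 * π * k) ∧
      psh (a, b, c) α '' Set.range (hLine p θ t) =
        Set.range (hLine (p + a * Real.cos θ' + b * Real.sin θ') θ' t') := by
  obtain ⟨k, θ'_mem, -⟩ := existsUnique_add_zsmul_mem_Ico Real.two_pi_pos (θ + α) 0
  rw [zero_add, zsmul_eq_mul, add_right_comm] at θ'_mem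
  have same_line : hLine p (θ + k * (2 * π)) t = hLine p θ t := (hLine_periodic p t).int_mul k θ
  have image_eq := image_psh_range_hLine a b c α p (θ + k * (2 * π)) t
  rw [same_line] at image_eq
  exact ⟨_, _, θ'_mem, ⟨k, by ring⟩, image_eq⟩
end
end
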